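/- arXiv:math/0512072 — 2 statements merged into one kernel-verified Lean document; each statement's English description precedes it below -/
import Mathlib

section
/- Let n ≥ 3, let (h_{ij})_{1≤i,j≤n−1} be a complex Hermitian matrix, and let 1 ≤ q ≤ n−2. Define the C(n−1,q) × C(n−1,q) matrix (H^q_{IJ}), indexed by multi-indices I, J of length q, by H^q_{II} = Σ_{i∉I} h_{ii} and, for I ≠ J, H^q_{IJ} = Σ_{i≠j} ε^{iI}_{jJ} h_{ji}. Then (H^q_{IJ}) is Hermitian; if λ_1,…,λ_{n−1} are the eigenvalues of (h_{ij}) listed with multiplicity, then the eigenvalues of (H^q_{IJ}) listed with multiplicity are exactly the sums Σ_{i∉S} λ_i over the q-element subsets S of {1,…,n−1} (i.e., sums of the eigenvalues of (h_{ij}) taken n−1−q at a time); consequently (H^q_{IJ}) is positive definite whenever (h_{ij}) is positive definite and n−1−q > 0, and positive semidefinite whenever (h_{ij}) is positive semidefinite, regardless of the value of n. -/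
open scoped ComplexOrder

/-- `epsSign i I j J` is the sign `ε^{iI}_{jJ}`: when the tuples `iI` and `jJ` (the index `i`,
resp. `j`, prepended to the increasing enumeration of `I`, resp. `J`) consist of exactly the
same indices without repetition (i.e. `i ∉ I`, `j ∉ J`, and `insert i I = insert j J`), it is
the sign of the permutation carrying `jJ` to `iI`; otherwise it is `0`.  The tuple `iI` is
obtained from the increasing enumeration of `insert i I` by moving `i` (sitting at position
`#{k ∈ I | k < i}`) to the front, whence the formula for the sign. -/
noncomputable def epsSign {m : ℕ} (i : Fin m) (I : Finset (Fin m)) (j : Fin m)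
    (J : Finset (Fin m)) : ℂ :=
  if i ∉ I ∧ j ∉ J ∧ insert i I = insert j J then
    (-1 : ℂ) ^ ((I.filter (fun k => k < i)).card + (J.filter (fun k => k < j)).card)
  else 0

/-- The matrix `(H^q_{IJ})` of Lemma 6.4, indexed by the `q`-element multi-indices
(identified with `q`-element subsets of `{1, …, n-1}`):
`H^q_{II} = ∑_{i ∉ I} h i i` and, for `I ≠ J`, `H^q_{IJ} = ∑_{i ≠ j} ε^{iI}_{jJ} h j i`. -/
noncomputable def Hmat {m : ℕ} (q : ℕ) (h : Matrix (Fin m) (Fin m) ℂ) :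
    Matrix {s : Finset (Fin m) // s.card = q} {s : Finset (Fin m) // s.card = q} ℂ :=
  fun I J =>
    if I = J then ∑ i ∈ I.1ᶜ, h i i
    else ∑ i : Fin m, ∑ j : Fin m, if i ≠ j then epsSign i I.1 j J.1 * h j i else 0

section Fock

variable {V : Type*} [AddCommGroup V] [Module ℂ V]

/-- Contraction of the exterior algebra by a linear form. -/
noncomputable def extContract :
    Module.Dual ℂ V →ₗ[ℂ] ExteriorAlgebra ℂ V →ₗ[ℂ] ExteriorAlgebra ℂ V :=
  CliffordAlgebra.contractLeft (Q := (0 : QuadraticForm ℂ V))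

lemma extContract_mul (d : Module.Dual ℂ V) (v : V) (x : ExteriorAlgebra ℂ V) :
    extContract d (ExteriorAlgebra.ι ℂ v * x) =
      d v • x - ExteriorAlgebra.ι ℂ v * extContract d x :=
  CliffordAlgebra.contractLeft_ι_mul (Q := (0 : QuadraticForm ℂ V)) d v x

lemma extContract_one (d : Module.Dual ℂ V) :
    extContract d (1 : ExteriorAlgebra ℂ V) = 0 :=
  CliffordAlgebra.contractLeft_one (0 : QuadraticForm ℂ V) d

variable {m : ℕ}

/-- The increasing wedge product of a family of vectors over a finite set of indices. -/
noncomputable def wedge (b : Fin m → V) (S : Finset (Fin m)) : ExteriorAlgebra ℂ V :=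
  (S.sort.map (fun i => ExteriorAlgebra.ι ℂ (b i))).prod

lemma wedge_insert_min (b : Fin m → V) (a : Fin m) (S : Finset (Fin m)) (h : ∀ x ∈ S, a < x) :
    wedge b (insert a S) = ExteriorAlgebra.ι ℂ (b a) * wedge b S := by
  unfold wedge
  rw [Finset.sort_insert _ (fun x hx => (h x hx).le) (fun ha => lt_irrefl _ (h a ha))]
  simp

lemma ι_swap (x y : V) (z : ExteriorAlgebra ℂ V) :
    ExteriorAlgebra.ι ℂ x * (ExteriorAlgebra.ι ℂ y * z) =
      -(ExteriorAlgebra.ι ℂ y * (ExteriorAlgebra.ι ℂ x * z)) := by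
  rw [← mul_assoc, ← mul_assoc, ← neg_mul, eq_neg_of_add_eq_zero_left
    (ExteriorAlgebra.ι_add_mul_swap x y)]

lemma ι_mul_wedge (b : Fin m → V) (j : Fin m) (J : Finset (Fin m)) (hj : j ∉ J) :
    ExteriorAlgebra.ι ℂ (b j) * wedge b J =
      ((-1 : ℂ) ^ (J.filter (fun k => k < j)).card) • wedge b (insert j J) := by
  induction J using Finset.induction_on_min with
  | empty => rw [wedge_insert_min _ _ _ (by simp)]; simp
  | insert a S ha ih =>
    simp only [Finset.mem_insert, not_or] at hj
    rcases lt_or_gt_of_ne hj.1 with hlt | hgt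
    · have h1 : ∀ x ∈ insert a S, j < x := by
        intro x hx
        rcases Finset.mem_insert.1 hx with rfl | hx
        · exact hlt
        · exact hlt.trans (ha x hx)
      rw [wedge_insert_min _ _ _ h1, Finset.filter_false_of_mem]
      · simp
      · intro x hx
        exact (h1 x hx).le.not_gt
    · rw [wedge_insert_min _ _ _ ha, ι_swap, ih hj.2, Finset.insert_comm,
        wedge_insert_min _ a (insert j S), Finset.filter_insert, if_pos hgt,
        Finset.card_insert_of_notMem, pow_succ]
      · simp
      · intro h
        exact lt_irrefl _ (ha a (Finset.mem_filter.1 h).1)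
      · intro x hx
        rcases Finset.mem_insert.1 hx with rfl | hx
        · exact hgt
        · exact ha x hx

lemma wedge_eq (b : Fin m → V) (j : Fin m) (J : Finset (Fin m)) (hj : j ∉ J) :
    wedge b (insert j J) =
      ((-1 : ℂ) ^ (J.filter (fun k => k < j)).card) •
        (ExteriorAlgebra.ι ℂ (b j) * wedge b J) := by
  rw [ι_mul_wedge b j J hj, smul_smul, ← mul_pow]
  simp

lemma ι_mul_wedge_mem (b : Fin m → V) (j : Fin m) (J : Finset (Fin m)) (hj : j ∈ J) :
    ExteriorAlgebra.ι ℂ (b j) * wedge b J = 0 := by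
  rw [← Finset.insert_erase hj, wedge_eq b j _ (Finset.notMem_erase _ _), mul_smul_comm,
    ← mul_assoc, ExteriorAlgebra.ι_sq_zero]
  simp

lemma extContract_wedge_notMem (b : Module.Basis (Fin m) ℂ V) (i : Fin m) (K : Finset (Fin m))
    (hi : i ∉ K) : extContract (b.coord i) (wedge b K) = 0 := by
  induction K using Finset.induction_on_min with
  | empty => simp [wedge, extContract_one]
  | insert a S ha ih =>
    simp only [Finset.mem_insert, not_or] at hi
    rw [wedge_insert_min _ _ _ ha, extContract_mul, ih hi.2]
    simp [Finsupp.single_apply, Ne.symm hi.1]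

lemma extContract_wedge_insert (b : Module.Basis (Fin m) ℂ V) (i : Fin m) (I : Finset (Fin m))
    (hi : i ∉ I) : extContract (b.coord i) (wedge b (insert i I)) =
      ((-1 : ℂ) ^ (I.filter (fun k => k < i)).card) • wedge b I := by
  rw [wedge_eq b i I hi, map_smul, extContract_mul, extContract_wedge_notMem b i I hi]
  simp

lemma extContract_mul_wedge (b : Module.Basis (Fin m) ℂ V) (q : ℕ) (i j : Fin m)
    (J : {s : Finset (Fin m) // s.card = q}) :
    extContract (b.coord i) (ExteriorAlgebra.ι ℂ (b j) * wedge b J.1) =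
      ∑ I : {s : Finset (Fin m) // s.card = q}, epsSign i I.1 j J.1 • wedge b I.1 := by
  by_cases hj : j ∈ J.1
  · rw [ι_mul_wedge_mem b j _ hj, map_zero, Finset.sum_eq_zero]
    intro I _
    simp [epsSign, hj]
  by_cases hi : i ∈ insert j J.1
  · have hc : ((insert j J.1).erase i).card = q := by
      rw [Finset.card_erase_of_mem hi, Finset.card_insert_of_notMem hj, J.2]; simp
    rw [Finset.sum_eq_single ⟨(insert j J.1).erase i, hc⟩]
    · have h1 : insert i ((insert j J.1).erase i) = insert j J.1 := Finset.insert_erase hi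
      have h2 := extContract_wedge_insert b i _ (Finset.notMem_erase i (insert j J.1))
      rw [h1] at h2
      rw [ι_mul_wedge b j _ hj, map_smul, h2, epsSign, if_pos ⟨Finset.notMem_erase _ _, hj, h1⟩, smul_smul, pow_add, mul_comm]
    · intro I _ hI
      rw [epsSign, if_neg, zero_smul]
      rintro ⟨h1, -, h3⟩
      apply hI
      apply Subtype.ext
      simp only
      rw [← h3, Finset.erase_insert h1]
    · simp
  · rw [ι_mul_wedge b j _ hj, map_smul, extContract_wedge_notMem b i _ hi, smul_zero,
      Finset.sum_eq_zero]
    intro I _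
    rw [epsSign, if_neg, zero_smul]
    rintro ⟨-, -, h3⟩
    exact hi (h3 ▸ Finset.mem_insert_self _ _)

lemma epsSign_self_diag (i : Fin m) (I J : Finset (Fin m)) (h : I ≠ J) :
    epsSign i I i J = 0 := by
  rw [epsSign, if_neg]
  rintro ⟨h1, h2, h3⟩
  apply h
  rw [← Finset.erase_insert h1, h3, Finset.erase_insert h2]

lemma epsSign_same (i j : Fin m) (I : Finset (Fin m)) :
    epsSign i I j I = if i = j ∧ i ∉ I then 1 else 0 := by
  unfold epsSign
  by_cases hij : i = j
  · subst hij
    by_cases hi : i ∈ I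
    · simp [hi]
    · simp [hi, ← two_mul]
  · rw [if_neg, if_neg (by tauto)]
    rintro ⟨h1, h2, h3⟩
    have : i ∈ insert j I := h3 ▸ Finset.mem_insert_self _ _
    simp [hij, h1] at this

lemma epsSign_symm (i j : Fin m) (I J : Finset (Fin m)) :
    epsSign i I j J = epsSign j J i I := by
  unfold epsSign
  have : (i ∉ I ∧ j ∉ J ∧ insert i I = insert j J) ↔ (j ∉ J ∧ i ∉ I ∧ insert j J = insert i I) := by
    constructor <;> rintro ⟨a, b, c⟩ <;> exact ⟨b, a, c.symm⟩
  simp only [this, add_comm]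

lemma epsSign_star (i j : Fin m) (I J : Finset (Fin m)) :
    star (epsSign i I j J) = epsSign i I j J := by
  unfold epsSign
  split_ifs <;> simp

lemma Hmat_eq (q : ℕ) (h : Matrix (Fin m) (Fin m) ℂ) (I J : {s : Finset (Fin m) // s.card = q}) :
    Hmat q h I J = ∑ i, ∑ j, epsSign i I.1 j J.1 * h j i := by
  unfold Hmat
  split_ifs with hIJ
  · subst hIJ
    simp only [epsSign_same, ite_and, ite_mul, one_mul, zero_mul, Finset.sum_ite_eq,
      Finset.mem_univ, if_true]
    rw [← Finset.sum_filter]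
    congr 1
    ext; simp
  · refine Finset.sum_congr rfl fun i _ => Finset.sum_congr rfl fun j _ => ?_
    split_ifs with hij
    · rfl
    · obtain rfl := not_not.1 hij
      rw [epsSign_self_diag i _ _ (fun h => hIJ (Subtype.ext h)), zero_mul]

lemma Hmat_isHermitian (q : ℕ) (h : Matrix (Fin m) (Fin m) ℂ) (hh : h.IsHermitian) :
    (Hmat q h).IsHermitian := by
  ext I J
  rw [Matrix.conjTranspose_apply, Hmat_eq, Hmat_eq, star_sum, Finset.sum_comm]
  simp only [star_sum, star_mul', epsSign_star]
  rw [Finset.sum_comm, Finset.sum_comm]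
  refine Finset.sum_congr rfl fun i _ => Finset.sum_congr rfl fun j _ => ?_
  rw [epsSign_symm, hh.apply]

/-- The operator on the exterior algebra inducing `Hmat`. -/
noncomputable def fockOp (b : Module.Basis (Fin m) ℂ V) (f : V →ₗ[ℂ] V) :
    ExteriorAlgebra ℂ V →ₗ[ℂ] ExteriorAlgebra ℂ V :=
  ∑ i, extContract (b.coord i) ∘ₗ LinearMap.mulLeft ℂ (ExteriorAlgebra.ι ℂ (f (b i)))

lemma fockOp_apply (b : Module.Basis (Fin m) ℂ V) (f : V →ₗ[ℂ] V) (x : ExteriorAlgebra ℂ V) :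
    fockOp b f x = ∑ i, extContract (b.coord i) (ExteriorAlgebra.ι ℂ (f (b i)) * x) := by
  simp [fockOp]

lemma fockOp_basis (b u : Module.Basis (Fin m) ℂ V) (f : V →ₗ[ℂ] V) : fockOp b f = fockOp u f := by
  refine LinearMap.ext fun x => ?_
  rw [fockOp_apply, fockOp_apply]
  have h1 : ∀ i, b.coord i = ∑ k, b.coord i (u k) • u.coord k := by
    intro i
    apply u.ext
    intro k
    simp [Finsupp.single_apply]
  have h2 : ∀ k, f (u k) = ∑ i, b.coord i (u k) • f (b i) := by
    intro k
    conv_lhs => rw [← b.sum_repr (u k), map_sum]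
    simp only [map_smul, Module.Basis.coord_apply]
  calc _ = ∑ i, ∑ k, b.coord i (u k) •
        extContract (u.coord k) (ExteriorAlgebra.ι ℂ (f (b i)) * x) := by
        refine Finset.sum_congr rfl fun i _ => ?_
        conv_lhs => rw [h1 i]
        simp only [map_sum, map_smul, LinearMap.sum_apply, LinearMap.smul_apply]
    _ = _ := by
        rw [Finset.sum_comm]
        refine Finset.sum_congr rfl fun k _ => ?_
        conv_rhs => rw [h2 k]
        simp only [map_sum, map_smul, Finset.sum_mul, smul_mul_assoc]

lemma fockOp_wedge (b : Module.Basis (Fin m) ℂ V) (f : V →ₗ[ℂ] V)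
    (h : Matrix (Fin m) (Fin m) ℂ) (hf : ∀ i, f (b i) = ∑ j, h j i • b j) (q : ℕ)
    (J : {s : Finset (Fin m) // s.card = q}) :
    fockOp b f (wedge b J.1) = ∑ I, Hmat q h I J • wedge b I.1 := by
  rw [fockOp_apply]
  simp only [hf, map_sum, map_smul, Finset.sum_mul, smul_mul_assoc, extContract_mul_wedge b q,
    Hmat_eq, Finset.sum_smul, Finset.smul_sum, smul_smul]
  simp only [mul_comm (h _ _)]
  calc _ = ∑ i, ∑ I : {s : Finset (Fin m) // s.card = q}, ∑ j,
        (epsSign i I.1 j J.1 * h j i) • wedge b I.1 :=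
        Finset.sum_congr rfl fun i _ => Finset.sum_comm
    _ = _ := Finset.sum_comm

lemma fockOp_wedge_eigen (u : Module.Basis (Fin m) ℂ V) (f : V →ₗ[ℂ] V)
    (μ : Fin m → ℂ) (hf : ∀ i, f (u i) = μ i • u i) (S : Finset (Fin m)) :
    fockOp u f (wedge u S) = (∑ i ∈ Sᶜ, μ i) • wedge u S := by
  rw [fockOp_apply, Finset.sum_smul, ← Finset.sum_subset (Finset.subset_univ Sᶜ)]
  · refine Finset.sum_congr rfl fun i hi => ?_
    rw [hf, map_smul, smul_mul_assoc, map_smul, extContract_mul,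
      extContract_wedge_notMem u i S (by simpa using hi)]
    simp
  · intro i _ hi
    rw [hf, map_smul, smul_mul_assoc, ι_mul_wedge_mem u i S (by simpa using hi)]
    simp

lemma exists_wedge_basis (b : Module.Basis (Fin m) ℂ V) (q : ℕ) :
    ∃ B : Module.Basis {s : Finset (Fin m) // s.card = q} ℂ (⋀[ℂ]^q V),
      ∀ S, (B S : ExteriorAlgebra ℂ V) = wedge b S.1 := by
  let e : Set.powersetCard (Fin m) q ≃ {s : Finset (Fin m) // s.card = q} :=
    Equiv.subtypeEquivRight (fun s => Set.powersetCard.mem_iff)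
  refine ⟨(b.exteriorPower q).reindex e, fun S => ?_⟩
  rw [Module.Basis.reindex_apply, exteriorPower.basis_apply, exteriorPower.ιMulti_family_apply_coe]
  unfold ExteriorAlgebra.ιMulti_family wedge
  rw [ExteriorAlgebra.ιMulti_apply, ← Finset.listMap_orderEmbOfFin_finRange S.1 S.2, List.map_map,
    List.ofFn_eq_map]
  rfl

lemma Hmat_charpoly [Module.Finite ℂ V] (b u : Module.Basis (Fin m) ℂ V) (f : V →ₗ[ℂ] V)
    (h : Matrix (Fin m) (Fin m) ℂ) (hf : ∀ i, f (b i) = ∑ j, h j i • b j)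
    (μ : Fin m → ℂ) (hu : ∀ i, f (u i) = μ i • u i) (q : ℕ) :
    (Hmat q h).charpoly = ∏ S : {s : Finset (Fin m) // s.card = q},
      (Polynomial.X - Polynomial.C (∑ i ∈ S.1ᶜ, μ i)) := by
  obtain ⟨B, hB⟩ := exists_wedge_basis b q
  obtain ⟨U, hU⟩ := exists_wedge_basis u q
  let T := Matrix.toLin B B (Hmat q h)
  have hT : ∀ x : ⋀[ℂ]^q V, (T x : ExteriorAlgebra ℂ V) = fockOp b f x := by
    have : (Submodule.subtype _) ∘ₗ T = fockOp b f ∘ₗ (Submodule.subtype (⋀[ℂ]^q V)) := by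
      apply B.ext
      intro J
      simp only [LinearMap.comp_apply, Submodule.subtype_apply, hB]
      rw [fockOp_wedge b f h hf q J]
      simp [T, Matrix.toLin_self, hB]
    exact fun x => LinearMap.congr_fun this x
  have hTU : ∀ S, T (U S) = (∑ i ∈ S.1ᶜ, μ i) • U S := by
    intro S
    apply Subtype.ext
    rw [hT, fockOp_basis b u, hU, fockOp_wedge_eigen u f μ hu, Submodule.coe_smul, hU]
  have hD : LinearMap.toMatrix U U T = Matrix.diagonal (fun S => ∑ i ∈ S.1ᶜ, μ i) := by
    ext I S
    rw [LinearMap.toMatrix_apply, hTU, Matrix.diagonal_apply]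
    by_cases hIS : I = S
    · subst hIS; simp
    · simp [hIS, Finsupp.single_apply, Ne.symm hIS]
  rw [← Matrix.charpoly_toLin (Hmat q h) B, ← LinearMap.charpoly_toMatrix _ U, hD,
    Matrix.charpoly_diagonal]

end Fock

lemma Hmat_roots {m : ℕ} (q : ℕ) (h : Matrix (Fin m) (Fin m) ℂ) (hh : h.IsHermitian)
    (hH : (Hmat q h).IsHermitian) :
    (Finset.univ.val.map
      (fun S : {s : Finset (Fin m) // s.card = q} => ∑ i ∈ S.1ᶜ, hh.eigenvalues i))
        = Finset.univ.val.map hH.eigenvalues := by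
  have hc := Hmat_charpoly (EuclideanSpace.basisFun (Fin m) ℂ).toBasis
    hh.eigenvectorBasis.toBasis (Matrix.toEuclideanLin h) h ?_ (fun i => (hh.eigenvalues i : ℂ))
    ?_ q
  · have h1 := hH.roots_charpoly_eq_eigenvalues
    rw [hc, Polynomial.roots_prod _ _ (Finset.prod_ne_zero_iff.2
      fun S _ => Polynomial.X_sub_C_ne_zero _)] at h1
    simp only [Polynomial.roots_X_sub_C, Multiset.bind_singleton] at h1
    apply Multiset.map_injective Complex.ofReal_injective
    simpa [Multiset.map_map, Function.comp_def] using h1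
  · intro i
    ext k
    simp [Matrix.toLpLin_apply, Matrix.mulVec_single, Pi.single_apply]
  · intro i
    have := hh.mulVec_eigenvectorBasis i
    ext k
    simpa [Matrix.toLpLin_apply] using congrFun this k

/-- Lemma 6.4 of the paper: if `h` is an `(n-1) × (n-1)` Hermitian matrix and `1 ≤ q ≤ n-2`,
then `(H^q_{IJ})` is Hermitian; its eigenvalues, listed with multiplicity, are exactly the sums
`∑_{i ∉ S} λ_i` over the `q`-element subsets `S` (sums of the eigenvalues of `h` taken
`n-1-q` at a time); consequently it is positive definite whenever `h` is positive definite and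
`n - 1 - q > 0`, and positive semidefinite whenever `h` is positive semidefinite, regardless
of the value of `n`. -/
theorem Hmat_isHermitian_eigenvalues_posDef
    {n : ℕ} (hn : 3 ≤ n) (q : ℕ) (hq1 : 1 ≤ q) (hq2 : q ≤ n - 2)
    (h : Matrix (Fin (n - 1)) (Fin (n - 1)) ℂ) (hh : h.IsHermitian) :
    ∃ hH : (Hmat q h).IsHermitian,
      (Finset.univ.val.map
          (fun S : {s : Finset (Fin (n - 1)) // s.card = q} => ∑ i ∈ S.1ᶜ, hh.eigenvalues i))
        = Finset.univ.val.map hH.eigenvalues ∧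
      (h.PosDef → 0 < n - 1 - q → (Hmat q h).PosDef) ∧
      (h.PosSemidef → (Hmat q h).PosSemidef) := by
  have hH := Hmat_isHermitian q h hh
  have hr := Hmat_roots q h hh hH
  have key : ∀ I, ∃ S : {s : Finset (Fin (n - 1)) // s.card = q},
      ∑ i ∈ S.1ᶜ, hh.eigenvalues i = hH.eigenvalues I := by
    intro I
    have h1 : hH.eigenvalues I ∈ Finset.univ.val.map hH.eigenvalues :=
      Multiset.mem_map_of_mem _ (Finset.mem_univ_val I)
    rw [← hr] at h1
    obtain ⟨S, -, hS⟩ := Multiset.mem_map.1 h1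
    exact ⟨S, hS⟩
  refine ⟨hH, hr, fun hp hq => ?_, fun hp => ?_⟩
  · rw [hH.posDef_iff_eigenvalues_pos]
    intro I
    obtain ⟨S, hS⟩ := key I
    rw [← hS]
    refine Finset.sum_pos (fun i _ => hh.posDef_iff_eigenvalues_pos.1 hp i) ?_
    rw [← Finset.card_pos, Finset.card_compl, S.2, Fintype.card_fin]
    exact hq
  · rw [hH.posSemidef_iff_eigenvalues_nonneg]
    intro I
    obtain ⟨S, hS⟩ := key I
    rw [← hS]
    exact Finset.sum_nonneg fun i _ => hh.posSemidef_iff_eigenvalues_nonneg.1 hp i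
end

section
/- Let T be a closed, densely defined linear operator on a complex Hilbert space H whose range is contained in its kernel, and let T* denote its Hilbert-space adjoint. Then the operator □ = T T* + T* T, with domain Dom(□) = {φ ∈ Dom(T) ∩ Dom(T*) : Tφ ∈ Dom(T*) and T*φ ∈ Dom(T)} and □φ = T(T*φ) + T*(Tφ), is self-adjoint. -/
namespace KohnAux

variable {H : Type*} [NormedAddCommGroup H] [InnerProductSpace ℂ H]

theorem app_add (T : H →ₗ.[ℂ] H) {x y z : H} (hy : y ∈ T.domain) (hz : z ∈ T.domain)
    (h : x = y + z) : ∃ hx : x ∈ T.domain, T ⟨x, hx⟩ = T ⟨y, hy⟩ + T ⟨z, hz⟩ := by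
  subst h
  exact ⟨T.domain.add_mem hy hz, T.map_add ⟨y, hy⟩ ⟨z, hz⟩⟩

theorem app_smul (T : H →ₗ.[ℂ] H) (c : ℂ) {x y : H} (hy : y ∈ T.domain)
    (h : x = c • y) : ∃ hx : x ∈ T.domain, T ⟨x, hx⟩ = c • T ⟨y, hy⟩ := by
  subst h
  exact ⟨T.domain.smul_mem c hy, T.map_smul c ⟨y, hy⟩⟩

/-- The natural domain of `T S + S T`. -/
def boxDomain (T S : H →ₗ.[ℂ] H) : Submodule ℂ H where
  carrier := {x | ∃ (h1 : x ∈ T.domain) (h2 : x ∈ S.domain),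
      T ⟨x, h1⟩ ∈ S.domain ∧ S ⟨x, h2⟩ ∈ T.domain}
  zero_mem' := by
    refine ⟨T.domain.zero_mem, S.domain.zero_mem, ?_, ?_⟩
    · have : T ⟨0, T.domain.zero_mem⟩ = 0 := T.map_zero
      rw [this]; exact S.domain.zero_mem
    · have : S ⟨0, S.domain.zero_mem⟩ = 0 := S.map_zero
      rw [this]; exact T.domain.zero_mem
  add_mem' := by
    rintro x y ⟨h1, h2, h3, h4⟩ ⟨k1, k2, k3, k4⟩
    obtain ⟨a, ha⟩ := app_add T h1 k1 rfl
    obtain ⟨b, hb⟩ := app_add S h2 k2 rfl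
    exact ⟨a, b, (app_add S h3 k3 ha).1, (app_add T h4 k4 hb).1⟩
  smul_mem' := by
    rintro c x ⟨h1, h2, h3, h4⟩
    obtain ⟨a, ha⟩ := app_smul T c h1 rfl
    obtain ⟨b, hb⟩ := app_smul S c h2 rfl
    exact ⟨a, b, (app_smul S c h3 ha).1, (app_smul T c h4 hb).1⟩

/-- The sum `T S + S T` on its natural domain. -/
noncomputable def box (T S : H →ₗ.[ℂ] H) : H →ₗ.[ℂ] H where
  domain := boxDomain T S
  toFun :=
    { toFun := fun x => T ⟨S ⟨x.1, x.2.snd.fst⟩, x.2.snd.snd.2⟩ +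
        S ⟨T ⟨x.1, x.2.fst⟩, x.2.snd.snd.1⟩
      map_add' := by
        rintro ⟨x, h1, h2, h3, h4⟩ ⟨y, k1, k2, k3, k4⟩
        obtain ⟨a, ha⟩ := app_add T h1 k1 rfl
        obtain ⟨b, hb⟩ := app_add S h2 k2 rfl
        obtain ⟨c, hc⟩ := app_add S h3 k3 ha
        obtain ⟨d, hd⟩ := app_add T h4 k4 hb
        exact (congrArg₂ (· + ·) hd hc).trans (add_add_add_comm _ _ _ _)
      map_smul' := by
        rintro r ⟨x, h1, h2, h3, h4⟩
        obtain ⟨a, ha⟩ := app_smul T r h1 rfl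
        obtain ⟨b, hb⟩ := app_smul S r h2 rfl
        obtain ⟨c, hc⟩ := app_smul S r h3 ha
        obtain ⟨d, hd⟩ := app_smul T r h4 hb
        exact (congrArg₂ (· + ·) hd hc).trans (smul_add _ _ _).symm }

variable [CompleteSpace H]

/-- Orthogonal decomposition of `H × H` along the graph of `T`. -/
theorem decomp (T : H →ₗ.[ℂ] H) (hdense : Dense (T.domain : Set H)) (hclosed : T.IsClosed)
    (f g : H) : ∃ (x : H) (hx : x ∈ T.domain) (y : H) (hy : y ∈ T.adjoint.domain),
      f = x - T.adjoint ⟨y, hy⟩ ∧ g = T ⟨x, hx⟩ + y := by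
  let e := WithLp.prodContinuousLinearEquiv 2 ℂ H H
  let K : Submodule ℂ (WithLp 2 (H × H)) := T.graph.comap e.toLinearEquiv.toLinearMap
  have hK : IsClosed (K : Set (WithLp 2 (H × H))) := IsClosed.preimage e.continuous hclosed
  have : CompleteSpace K := hK.completeSpace_coe
  obtain ⟨p, hp, q, hq, hpq⟩ := K.exists_add_mem_mem_orthogonal (WithLp.toLp 2 (f, g))
  have hp' : (p.fst, p.snd) ∈ T.graph := hp
  rw [LinearPMap.mem_graph_iff] at hp'
  obtain ⟨⟨x, hx⟩, hx1, hx2⟩ := hp'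
  simp only at hx1 hx2
  have key : ∀ z : T.domain, inner ℂ (-q.fst) (z : H) = inner ℂ q.snd (T z) := by
    intro z
    have hz : WithLp.toLp 2 ((z : H), T z) ∈ K := T.mem_graph z
    have := (Submodule.mem_orthogonal' K q).1 hq _ hz
    rw [WithLp.prod_inner_apply] at this
    simp only [inner_neg_left]
    exact neg_eq_of_add_eq_zero_right this
  have hy : q.snd ∈ T.adjoint.domain := LinearPMap.mem_adjoint_domain_of_exists _ ⟨_, key⟩
  refine ⟨x, hx, q.snd, hy, ?_, ?_⟩
  · rw [LinearPMap.adjoint_apply_eq hdense ⟨q.snd, hy⟩ key, hx1, sub_neg_eq_add]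
    exact congrArg WithLp.fst hpq
  · rw [hx2]
    exact congrArg WithLp.snd hpq

theorem adj_sq (T : H →ₗ.[ℂ] H) (hdense : Dense (T.domain : Set H))
    (hrange : ∀ x : T.domain, ∃ hx : T x ∈ T.domain, T ⟨T x, hx⟩ = 0) (y : T.adjoint.domain) :
    ∃ hy : T.adjoint y ∈ T.adjoint.domain, T.adjoint ⟨T.adjoint y, hy⟩ = 0 := by
  have key : ∀ z : T.domain, inner ℂ (0 : H) (z : H) = inner ℂ (T.adjoint y) (T z) := by
    intro z
    obtain ⟨h, h0⟩ := hrange z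
    have := LinearPMap.adjoint_isFormalAdjoint hdense y ⟨T z, h⟩
    rw [h0] at this
    simpa using this.symm
  have hy := LinearPMap.mem_adjoint_domain_of_exists _ ⟨_, key⟩
  exact ⟨hy, LinearPMap.adjoint_apply_eq hdense ⟨_, hy⟩ key⟩

theorem surj (T : H →ₗ.[ℂ] H) (hdense : Dense (T.domain : Set H)) (hclosed : T.IsClosed)
    (hrange : ∀ x : T.domain, ∃ hx : T x ∈ T.domain, T ⟨T x, hx⟩ = 0) (f : H) :
    ∃ x : (box T T.adjoint).domain, (x : H) + box T T.adjoint x = f := by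
  obtain ⟨a, ha, y, hy, e1, e2⟩ := decomp T hdense hclosed f 0
  obtain ⟨w, hw, b, hb, e3, e4⟩ := decomp T hdense hclosed 0 f
  -- `T a = -y`, `f = a - T* y`, `w = T* b`, `f = T w + b`
  have e2' : T ⟨a, ha⟩ = (-1 : ℂ) • y := by
    rw [neg_one_smul]; exact eq_neg_of_add_eq_zero_left e2.symm
  have e3' : T.adjoint ⟨b, hb⟩ = w := (sub_eq_zero.1 e3.symm).symm
  obtain ⟨c1, c2⟩ := hrange ⟨w, hw⟩
  obtain ⟨d1, d2⟩ := adj_sq T hdense hrange ⟨y, hy⟩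
  obtain ⟨m1, m2⟩ := app_smul T (-1) c1 rfl
  obtain ⟨n1, n2⟩ := app_add T (x := a + b - f) ha m1 (by rw [e4, neg_one_smul]; abel)
  obtain ⟨p1, p2⟩ := app_add T.adjoint (x := a + b - f) hb d1 (by rw [e1]; abel)
  rw [m2, c2, smul_zero, add_zero, e2'] at n2
  rw [d2, add_zero, e3'] at p2
  obtain ⟨q1, q2⟩ := app_smul T.adjoint (-1) hy n2
  have hmem : T.adjoint ⟨a + b - f, p1⟩ ∈ T.domain := by rw [p2]; exact hw
  refine ⟨⟨a + b - f, n1, p1, q1, hmem⟩, ?_⟩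
  change a + b - f + (T ⟨T.adjoint ⟨a + b - f, p1⟩, hmem⟩ +
    T.adjoint ⟨T ⟨a + b - f, n1⟩, q1⟩) = f
  rw [q2]
  simp only [p2, neg_one_smul]
  have e1' : T.adjoint ⟨y, hy⟩ = a - f := by rw [e1]; abel
  have e4' : T ⟨w, hw⟩ = f - b := eq_sub_of_add_eq e4.symm
  rw [e1', e4']
  abel

theorem box_inner (T : H →ₗ.[ℂ] H) (hdense : Dense (T.domain : Set H))
    (x y : (box T T.adjoint).domain) :
    inner ℂ (box T T.adjoint x) (y : H) =
      inner ℂ (T.adjoint ⟨x.1, x.2.snd.fst⟩) (T.adjoint ⟨y.1, y.2.snd.fst⟩) +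
      inner ℂ (T ⟨x.1, x.2.fst⟩) (T ⟨y.1, y.2.fst⟩) := by
  have h := LinearPMap.adjoint_isFormalAdjoint hdense
  obtain ⟨x, h1, h2, h3, h4⟩ := x
  obtain ⟨y, k1, k2, k3, k4⟩ := y
  change inner ℂ (T ⟨T.adjoint ⟨x, h2⟩, h4⟩ + T.adjoint ⟨T ⟨x, h1⟩, h3⟩) y = _
  rw [inner_add_left]
  exact congrArg₂ (· + ·) (h.symm ⟨_, h4⟩ ⟨y, k2⟩) (h ⟨_, h3⟩ ⟨y, k1⟩)

theorem box_symm (T : H →ₗ.[ℂ] H) (hdense : Dense (T.domain : Set H)) :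
    (box T T.adjoint).IsFormalAdjoint (box T T.adjoint) := by
  intro x y
  rw [← inner_conj_symm (x : H), box_inner T hdense, box_inner T hdense, map_add,
    inner_conj_symm, inner_conj_symm]

theorem box_dense (T : H →ₗ.[ℂ] H) (hdense : Dense (T.domain : Set H)) (hclosed : T.IsClosed)
    (hrange : ∀ x : T.domain, ∃ hx : T x ∈ T.domain, T ⟨T x, hx⟩ = 0) :
    Dense ((box T T.adjoint).domain : Set H) := by
  rw [Submodule.dense_iff_topologicalClosure_eq_top,
    Submodule.topologicalClosure_eq_top_iff, Submodule.eq_bot_iff]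
  intro v hv
  obtain ⟨x, rfl⟩ := surj T hdense hclosed hrange v
  have h0 := (Submodule.mem_orthogonal' _ _).1 hv x x.2
  rw [inner_add_left, box_inner T hdense] at h0
  have h1 := congrArg Complex.re h0
  simp only [Complex.add_re, Complex.zero_re] at h1
  have a1 := inner_self_nonneg (𝕜 := ℂ) (x := (x : H))
  have a2 := inner_self_nonneg (𝕜 := ℂ) (x := T.adjoint ⟨x.1, x.2.snd.fst⟩)
  have a3 := inner_self_nonneg (𝕜 := ℂ) (x := T ⟨x.1, x.2.fst⟩)
  simp only [RCLike.re_to_complex] at a1 a2 a3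
  have hx : (x : H) = 0 := by
    have h2 : (inner ℂ (x : H) (x : H)).re = ‖(x : H)‖ ^ 2 :=
      inner_self_eq_norm_sq (𝕜 := ℂ) (x : H)
    have h3 : ‖(x : H)‖ ^ 2 = 0 := by linarith
    simpa using h3
  have hx' : x = 0 := Subtype.ext hx
  rw [hx', LinearPMap.map_zero]
  simp

theorem box_selfAdjoint (T : H →ₗ.[ℂ] H) (hdense : Dense (T.domain : Set H))
    (hclosed : T.IsClosed)
    (hrange : ∀ x : T.domain, ∃ hx : T x ∈ T.domain, T ⟨T x, hx⟩ = 0) :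
    IsSelfAdjoint (box T T.adjoint) := by
  have hs := box_symm T hdense
  have hsurj := surj T hdense hclosed hrange
  have hd := box_dense T hdense hclosed hrange
  rw [LinearPMap.isSelfAdjoint_def]
  generalize box T T.adjoint = B at hs hsurj hd
  have hle := hs.le_adjoint hd
  refine (LinearPMap.eq_of_le_of_domain_eq hle (le_antisymm hle.1 ?_)).symm
  intro y hy
  obtain ⟨x, hx⟩ := hsurj (y + B.adjoint ⟨y, hy⟩)
  obtain ⟨z, hz⟩ := hsurj (y - x)
  have h1 := LinearPMap.adjoint_isFormalAdjoint hd ⟨y, hy⟩ z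
  have h2 := hs x z
  have h3 : inner ℂ (y - x) ((z : H) + B z) = 0 := by
    have := congrArg (fun u => inner ℂ u (z : H)) hx
    simp only [inner_add_left] at this
    rw [inner_sub_left, inner_add_right, inner_add_right, ← h1, ← h2, this, sub_self]
  rw [hz, inner_self_eq_zero, sub_eq_zero] at h3
  rw [h3]
  exact x.2

end KohnAux


/-- Section 5 of the paper: if `T` is a closed, densely defined operator on a complex Hilbert
space whose range is contained in its kernel (as for `T = ∂̄_b`, since `∂̄_b² = 0`), then the
Kohn Laplacian `□ = T T* + T* T`, with domain
`{φ ∈ Dom T ∩ Dom T* : Tφ ∈ Dom T* and T*φ ∈ Dom T}` and `□φ = T(T*φ) + T*(Tφ)`,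
is self-adjoint. -/
theorem kohn_laplacian_selfAdjoint
    {H : Type*} [NormedAddCommGroup H] [InnerProductSpace ℂ H] [CompleteSpace H]
    (T : H →ₗ.[ℂ] H) (hdense : Dense (T.domain : Set H)) (hclosed : T.IsClosed)
    (hrange : ∀ x : T.domain, ∃ hx : T x ∈ T.domain, T ⟨T x, hx⟩ = 0) :
    ∃ Box : H →ₗ.[ℂ] H,
      (∀ x : H, x ∈ Box.domain ↔
        ∃ (h1 : x ∈ T.domain) (h2 : x ∈ T.adjoint.domain),
          T ⟨x, h1⟩ ∈ T.adjoint.domain ∧ T.adjoint ⟨x, h2⟩ ∈ T.domain) ∧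
      (∀ (x : H) (hx : x ∈ Box.domain) (h1 : x ∈ T.domain) (h2 : x ∈ T.adjoint.domain)
          (h3 : T ⟨x, h1⟩ ∈ T.adjoint.domain) (h4 : T.adjoint ⟨x, h2⟩ ∈ T.domain),
        Box ⟨x, hx⟩ = T ⟨T.adjoint ⟨x, h2⟩, h4⟩ + T.adjoint ⟨T ⟨x, h1⟩, h3⟩) ∧
      IsSelfAdjoint Box := by
  exact ⟨KohnAux.box T T.adjoint, fun x => Iff.rfl, fun x hx h1 h2 h3 h4 => rfl,
    KohnAux.box_selfAdjoint T hdense hclosed hrange⟩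
end
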